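/- Let f ∈ L¹_loc with ∇f ∈ Lᵖ, let Ω = {M(|∇f|ᵖ) > αᵖ} with Whitney cubes (Qᵢ) and subordinate partition of unity (𝒳ᵢ), and cᵢ = m_{Qᵢ} f. Then for neighboring cubes (i ∈ I_m): |c_m − cᵢ| ≤ C α ℓ_m, with C depending only on n and p; consequently Σ_m Σ_{i∈I_m} |c_m − cᵢ||∇𝒳ᵢ|𝒳_m ≤ C'α pointwise. -/

import Mathlib

/-!
The means over two neighbouring Whitney cubes are compared by sliding one cube affinely onto the
other. Let `T₁`, `T₂` parametrize the cubes by the unit cube, so that the difference of the means is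
`∫ (f (T₁ u) - f (T₂ u)) du` over `refCube n`. For smooth `f` the integrand is at most
`|T₁ u - T₂ u| ∫₀¹ |∇f| ((1 - t) T₂ u + t T₁ u) dt`, and for each fixed `t` the map
`u ↦ (1 - t) T₂ u + t T₁ u` is a translated dilation whose ratio is at least the smaller side, so
Fubini bounds everything by the integral of `|∇f|` over any ball containing both cubes
(`lintegral_sub_le_of_contDiff`). A function with weak gradient `G` is mollified: the gradient of
the mollification is the mollification of `G` (`lintegral_fderiv_mollify_le`), and the mollified
functions converge to `f` almost everywhere, so Fatou's lemma gives the same inequality for `f`, on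
a larger ball (`enorm_average_sub_le`).

The Whitney condition makes the sides of neighbouring cubes comparable and places both cubes in a
ball of radius `14 √n ℓ_m` centred at a point of `Ωᶜ` (`IsWhitneyDecomposition.exists_ball`). At
that centre the maximal function of `|G|ᵖ` is at most `αᵖ`, hence by Jensen's inequality the mean of
`|G|` over the doubled ball is at most `α` (`lintegral_le_of_maximalFn_le`). This gives
`|c_m - c_i| ≤ C α ℓ_m`.

At a given point at most `N` indices `m` and at most `N` indices `i` contribute to the double sum,
and by the symmetric bound `|c_m - c_i| ≤ C α ℓ_i` each term is at most
`C α ℓ_i * (C𝒳 / ℓ_i) = C C𝒳 α`.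
-/

open MeasureTheory ENNReal Filter Topology Metric

noncomputable section

abbrev En (n : ℕ) := EuclideanSpace ℝ (Fin n)

/-- An axis-parallel cube in ℝⁿ, given by its center and (positive) side length. -/
structure Cube (n : ℕ) where
  center : En n
  side : ℝ
  side_pos : 0 < side

namespace Cube

variable {n : ℕ}

/-- The (closed) cube as a subset of ℝⁿ. -/
def toSet (Q : Cube n) : Set (En n) := {x | ∀ j, |x j - Q.center j| ≤ Q.side / 2}

/-- The open cube. -/
def interior' (Q : Cube n) : Set (En n) := {x | ∀ j, |x j - Q.center j| < Q.side / 2}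

/-- The concentric dilate `lam • Q` as a set. -/
def dilate (Q : Cube n) (lam : ℝ) : Set (En n) :=
  {x | ∀ j, |x j - Q.center j| ≤ lam * Q.side / 2}

end Cube

/-- Distance between two sets in a metric space. -/
def setDist {α : Type*} [PseudoMetricSpace α] (s t : Set α) : ℝ :=
  sInf (Set.image2 dist s t)

/-- A Whitney decomposition of an open set `Ω`: countably many cubes with pairwise
disjoint interiors, whose union is `Ω`, and with `diam Q ≤ dist(Q, Ωᶜ) ≤ 4 diam Q`. -/
def IsWhitneyDecomposition {n : ℕ} {ι : Type*} (Ω : Set (En n)) (Q : ι → Cube n) : Prop :=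
  (∀ i j, i ≠ j → (Q i).interior' ∩ (Q j).interior' = ∅) ∧
  (⋃ i, (Q i).toSet) = Ω ∧
  ∀ i, Metric.diam (Q i).toSet ≤ setDist (Q i).toSet Ωᶜ ∧
    setDist (Q i).toSet Ωᶜ ≤ 4 * Metric.diam (Q i).toSet

/-- `G` is the distributional (weak) gradient of the function `f` on ℝⁿ. -/
def HasWeakGradient {n : ℕ} (f : En n → ℝ) (G : En n → En n) : Prop :=
  ∀ φ : En n → ℝ, ContDiff ℝ (⊤ : ℕ∞) φ → HasCompactSupport φ →
    ∫ x, f x • gradient φ x = - ∫ x, φ x • G x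

/-- Uncentered Hardy–Littlewood maximal function (over balls). -/
def maximalFn {n : ℕ} (u : En n → ℝ≥0∞) (x : En n) : ℝ≥0∞ :=
  ⨆ (z : En n) (r : ℝ) (_ : 0 < r) (_ : x ∈ Metric.ball z r),
    (volume (Metric.ball z r))⁻¹ * ∫⁻ y in Metric.ball z r, u y

/-! ### Mollification of a weakly differentiable function -/

open scoped Convolution

/-- The derivative of a mollification is dominated by the mollification of `‖G‖`: testing the weak
gradient identity against `t ↦ η (x - t)` moves the derivative from the mollifier to `f`. -/
lemma enorm_fderiv_mollify_le {n : ℕ} {f : En n → ℝ} {G : En n → En n}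
    (hf : LocallyIntegrable f volume) (hG : HasWeakGradient f G)
    (φ : ContDiffBump (0 : En n)) (x : En n) :
    ‖fderiv ℝ (φ.normed volume ⋆[ContinuousLinearMap.lsmul ℝ ℝ, volume] f) x‖ₑ ≤
      ∫⁻ t, ‖φ.normed volume (x - t)‖ₑ * ‖G t‖ₑ := by
  set η : En n → ℝ := φ.normed volume with hη
  have hηd : ContDiff ℝ (⊤ : ℕ∞) η := φ.contDiff_normed
  have hηc : HasCompactSupport η := φ.hasCompactSupport_normed
  set ψ : En n → ℝ := fun t => η (x - t) with hψ
  have hψd : ContDiff ℝ (⊤ : ℕ∞) ψ := hηd.comp (contDiff_const.sub contDiff_id)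
  have hψc : HasCompactSupport ψ := hηc.comp_homeomorph (Homeomorph.subLeft x)
  have key := hG ψ hψd hψc
  have hfd := (hηc.hasFDerivAt_convolution_left (ContinuousLinearMap.lsmul ℝ ℝ)
    (hηd.of_le (by exact_mod_cast le_top)) hf x).fderiv
  have hgradψ : ∀ t, gradient ψ t = - gradient η (x - t) := by
    intro t
    have : fderiv ℝ ψ t = - fderiv ℝ η (x - t) := by
      have h1 : HasFDerivAt η (fderiv ℝ η (x - t)) (x - t) :=
        (hηd.differentiable (by simp) _).hasFDerivAt
      have h2 : HasFDerivAt (fun t => x - t) (-(ContinuousLinearMap.id ℝ (En n))) t := by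
        simpa using (hasFDerivAt_id t).const_sub x
      have h3 : HasFDerivAt ψ _ t := h1.comp t h2
      rw [h3.fderiv]
      ext v; simp
    simp [gradient, this]
  have hcg : Continuous (gradient ψ) := by
    unfold gradient
    exact (LinearIsometryEquiv.continuous _).comp (hψd.continuous_fderiv (by simp))
  have hcgs : HasCompactSupport (gradient ψ) := by
    refine (hψc.fderiv (𝕜 := ℝ)).mono ?_
    intro t ht h0
    apply ht
    simp [gradient, h0]
  have hcη : Continuous (fderiv ℝ η) := hηd.continuous_fderiv (by simp)
  have hηs : HasCompactSupport (fderiv ℝ η) := hηc.fderiv (𝕜 := ℝ)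
  have hint := hf.integrable_smul_right_of_hasCompactSupport hcg hcgs
  have hval : ∀ v, fderiv ℝ (η ⋆[ContinuousLinearMap.lsmul ℝ ℝ, volume] f) x v
      = inner ℝ v (∫ t, ψ t • G t) := by
    intro v
    rw [hfd, ← neg_eq_iff_eq_neg.mpr key, convolution_eq_swap, inner_neg_right,
      ← integral_inner hint, ← integral_neg, ContinuousLinearMap.integral_apply]
    · refine integral_congr_ae (Eventually.of_forall fun t => ?_)
      simp only [ContinuousLinearMap.precompL_apply, ContinuousLinearMap.lsmul_apply, smul_eq_mul,
        hgradψ, inner_smul_right, inner_neg_right]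
      rw [← toDual_gradient, InnerProductSpace.toDual_apply_apply, real_inner_comm]
      ring
    · exact (hηs.convolutionExists_left _ hcη hf x).integrable_swap
  calc ‖fderiv ℝ (η ⋆[ContinuousLinearMap.lsmul ℝ ℝ, volume] f) x‖ₑ
      ≤ ‖∫ t, ψ t • G t‖ₑ := by
        rw [enorm_le_iff_norm_le]
        refine ContinuousLinearMap.opNorm_le_bound _ (norm_nonneg _) fun v => ?_
        rw [hval v, mul_comm]
        exact norm_inner_le_norm v _
    _ ≤ ∫⁻ t, ‖ψ t • G t‖ₑ := enorm_integral_le_lintegral_enorm _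
    _ = _ := by simp only [enorm_smul, hψ]

lemma lintegral_fderiv_mollify_le {n : ℕ} {f : En n → ℝ} {G : En n → En n}
    (hf : LocallyIntegrable f volume) (hG : HasWeakGradient f G) (hGm : Measurable G)
    (φ : ContDiffBump (0 : En n)) (z : En n) (R : ℝ) :
    ∫⁻ x in ball z R,
        ‖fderiv ℝ (φ.normed volume ⋆[ContinuousLinearMap.lsmul ℝ ℝ, volume] f) x‖ₑ ≤
      ∫⁻ t in ball z (R + φ.rOut), ‖G t‖ₑ := by
  set η : En n → ℝ := φ.normed volume with hη
  have hηm : Measurable η := φ.continuous_normed.measurable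
  calc _ ≤ ∫⁻ x in ball z R, ∫⁻ t, ‖η (x - t)‖ₑ * ‖G t‖ₑ :=
        lintegral_mono fun x => enorm_fderiv_mollify_le hf hG φ x
    _ = ∫⁻ t, ∫⁻ x in ball z R, ‖η (x - t)‖ₑ * ‖G t‖ₑ := by
        refine lintegral_lintegral_swap (Measurable.aemeasurable ?_)
        exact ((hηm.comp (measurable_fst.sub measurable_snd)).enorm).mul
          (hGm.comp measurable_snd).enorm
    _ ≤ ∫⁻ t, (ball z (R + φ.rOut)).indicator (fun t => ‖G t‖ₑ) t := by
        refine lintegral_mono fun t => ?_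
        by_cases ht : t ∈ ball z (R + φ.rOut)
        · rw [Set.indicator_of_mem ht]
          calc ∫⁻ x in ball z R, ‖η (x - t)‖ₑ * ‖G t‖ₑ
              ≤ ∫⁻ x, ‖η (x - t)‖ₑ * ‖G t‖ₑ := setLIntegral_le_lintegral _ _
            _ = (∫⁻ x, ‖η (x - t)‖ₑ) * ‖G t‖ₑ :=
                lintegral_mul_const _ (hηm.comp (measurable_id.sub_const t)).enorm
            _ = (∫⁻ x, ‖η x‖ₑ) * ‖G t‖ₑ := by
                rw [lintegral_sub_right_eq_self (fun x => ‖η x‖ₑ) t]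
            _ = ‖G t‖ₑ := by
                have : ∫⁻ x, ‖η x‖ₑ = 1 := by
                  rw [← ofReal_integral_norm_eq_lintegral_enorm φ.integrable_normed]
                  simp only [Real.norm_of_nonneg (φ.nonneg_normed _), φ.integral_normed,
                    ENNReal.ofReal_one]
                rw [this, one_mul]
        · rw [Set.indicator_of_notMem ht]
          refine le_of_eq ?_
          rw [setLIntegral_eq_zero_iff' measurableSet_ball]
          · refine Eventually.of_forall fun x hx => ?_
            have : η (x - t) = 0 := by
              by_contra h
              have h' : x - t ∈ Function.support η := h
              rw [hη, φ.support_normed_eq, mem_ball_zero_iff, ← dist_eq_norm] at h'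
              apply ht
              rw [mem_ball] at hx ⊢
              linarith [dist_triangle t x z, dist_comm x t]
            simp [this]
          · exact (((hηm.comp (measurable_id.sub_const t)).enorm).mul_const _).aemeasurable
    _ = _ := lintegral_indicator measurableSet_ball _

/-! ### Affine parametrization of cubes -/

/-- The unit cube centred at the origin, used as the common parameter domain for all cubes. -/
def refCube (n : ℕ) : Set (En n) := {u | ∀ j, |u j| ≤ 1 / 2}

lemma measurableSet_refCube (n : ℕ) : MeasurableSet (refCube n) := by
  have : IsClosed (refCube n) := by
    simp only [refCube, Set.ofPred_forall]
    exact isClosed_iInter fun j => isClosed_le (by fun_prop) continuous_const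
  exact this.measurableSet

lemma volume_refCube (n : ℕ) : volume (refCube n) = 1 := by
  have h : refCube n = (WithLp.ofLp : En n → Fin n → ℝ) ⁻¹'
      (Set.univ.pi fun _ => Set.Icc (-(1 / 2) : ℝ) (1 / 2)) := by
    ext u
    simp only [refCube, abs_le, Set.mem_ofPred_eq, Set.mem_preimage, Set.mem_univ_pi, Set.mem_Icc]
  rw [h, (PiLp.volume_preserving_ofLp (Fin n)).measure_preimage
    (MeasurableSet.univ_pi fun _ => measurableSet_Icc).nullMeasurableSet, volume_pi_pi]
  norm_num

lemma measurableEmbedding_aff {n : ℕ} (c : En n) {l : ℝ} (hl : 0 < l) :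
    MeasurableEmbedding (fun u : En n => c + l • u) :=
  ((Homeomorph.smulOfNeZero l hl.ne').trans (Homeomorph.addLeft c)).measurableEmbedding

lemma map_aff {n : ℕ} (c : En n) {l : ℝ} (hl : 0 < l) :
    Measure.map (fun u : En n => c + l • u) volume = ENNReal.ofReal ((l ^ n)⁻¹) • volume := by
  have h := Measure.map_addHaar_smul (volume : Measure (En n)) hl.ne'
  have h2 : (fun u : En n => c + l • u) = (fun v => c + v) ∘ (fun u => l • u) := rfl
  rw [h2, ← Measure.map_map (measurable_const_add c) (measurable_const_smul l), h,
    Measure.map_smul, (measurePreserving_add_left volume c).map_eq]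
  rw [finrank_euclideanSpace_fin, abs_of_nonneg (by positivity)]

lemma aff_preimage {n : ℕ} (Q : Cube n) :
    (fun u : En n => Q.center + Q.side • u) ⁻¹' Q.toSet = refCube n := by
  ext u
  have := Q.side_pos
  simp only [Cube.toSet, refCube, Set.mem_preimage, Set.mem_ofPred_eq, PiLp.add_apply,
    PiLp.smul_apply, smul_eq_mul, add_sub_cancel_left, abs_mul, abs_of_pos this]
  refine forall_congr' fun j => ?_
  rw [show Q.side / 2 = Q.side * (1 / 2) by ring, mul_le_mul_iff_right₀ this]

lemma map_aff_restrict {n : ℕ} (Q : Cube n) :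
    Measure.map (fun u : En n => Q.center + Q.side • u) (volume.restrict (refCube n)) =
      ENNReal.ofReal ((Q.side ^ n)⁻¹) • volume.restrict Q.toSet := by
  rw [← aff_preimage Q, ← (measurableEmbedding_aff Q.center Q.side_pos).restrict_map,
    map_aff _ Q.side_pos, Measure.restrict_smul]

lemma lintegral_aff_le {n : ℕ} (c : En n) {l : ℝ} (hl : 0 < l) {B : Set (En n)}
    (hB : MeasurableSet B) (hT : ∀ u ∈ refCube n, c + l • u ∈ B) (h : En n → ℝ≥0∞) :
    ∫⁻ u in refCube n, h (c + l • u) ≤ ENNReal.ofReal ((l ^ n)⁻¹) * ∫⁻ y in B, h y := by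
  calc ∫⁻ u in refCube n, h (c + l • u)
      = ∫⁻ u in refCube n, B.indicator h (c + l • u) := by
        refine setLIntegral_congr_fun (measurableSet_refCube n) fun u hu => ?_
        simp only [Set.indicator_of_mem (hT u hu)]
    _ ≤ ∫⁻ u, B.indicator h (c + l • u) := setLIntegral_le_lintegral _ _
    _ = ∫⁻ y, B.indicator h y ∂(Measure.map (fun u : En n => c + l • u) volume) :=
        ((measurableEmbedding_aff c hl).lintegral_map _).symm
    _ = _ := by
        rw [map_aff c hl, lintegral_smul_measure, lintegral_indicator hB, smul_eq_mul]

lemma isCompact_toSet {n : ℕ} (Q : Cube n) : IsCompact Q.toSet := by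
  have hc : IsCompact (Set.univ.pi fun j : Fin n =>
      Set.Icc (Q.center j - Q.side / 2) (Q.center j + Q.side / 2)) :=
    isCompact_univ_pi fun _ => isCompact_Icc
  convert! hc.image (PiLp.continuous_toLp 2 (fun _ : Fin n => ℝ)) using 1
  ext x
  simp only [Cube.toSet, Set.mem_ofPred_eq, Set.mem_image, Set.mem_univ_pi, Set.mem_Icc]
  constructor
  · intro h
    refine ⟨WithLp.ofLp x, fun j => ?_, rfl⟩
    have := abs_le.mp (h j)
    constructor <;> linarith
  · rintro ⟨y, hy, rfl⟩ j
    have := hy j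
    rw [abs_le]
    constructor <;> simp <;> linarith

lemma average_eq {n : ℕ} (Q : Cube n) (f : En n → ℝ) :
    ⨍ y in Q.toSet, f y = ∫ u in refCube n, f (Q.center + Q.side • u) := by
  have hs := Q.side_pos
  have h1 := congrArg (fun μ => μ Set.univ) (map_aff_restrict Q)
  simp only [Measure.smul_apply, Measure.restrict_apply_univ, smul_eq_mul] at h1
  rw [Measure.map_apply (measurableEmbedding_aff Q.center Q.side_pos).measurable
    MeasurableSet.univ, Set.preimage_univ, Measure.restrict_apply_univ, volume_refCube] at h1
  have hv : volume Q.toSet = ENNReal.ofReal (Q.side ^ n) := by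
    have h3 : ENNReal.ofReal (Q.side ^ n) * ENNReal.ofReal ((Q.side ^ n)⁻¹) = 1 := by
      rw [← ENNReal.ofReal_mul (by positivity), mul_inv_cancel₀ (by positivity),
        ENNReal.ofReal_one]
    calc volume Q.toSet = (ENNReal.ofReal (Q.side ^ n) * ENNReal.ofReal ((Q.side ^ n)⁻¹)) *
          volume Q.toSet := by rw [h3, one_mul]
      _ = _ := by rw [mul_assoc, ← h1, mul_one]
  have h2 := (measurableEmbedding_aff Q.center Q.side_pos).integral_map
    (μ := volume.restrict (refCube n)) f
  rw [map_aff_restrict, integral_smul_measure] at h2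
  rw [← h2, setAverage_eq, measureReal_def, hv, ENNReal.toReal_ofReal (by positivity),
    ENNReal.toReal_ofReal (by positivity)]

lemma integrableOn_aff {n : ℕ} (Q : Cube n) {f : En n → ℝ} (hf : LocallyIntegrable f volume) :
    IntegrableOn (fun u => f (Q.center + Q.side • u)) (refCube n) volume := by
  have h := (measurableEmbedding_aff Q.center Q.side_pos).integrable_map_iff
    (μ := volume.restrict (refCube n)) (g := f)
  refine h.mp ?_
  rw [map_aff_restrict]
  exact (hf.integrableOn_isCompact (isCompact_toSet Q)).smul_measure ENNReal.ofReal_ne_top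

lemma ae_aff {n : ℕ} (Q : Cube n) {P : En n → Prop} (hP : ∀ᵐ y, P y) :
    ∀ᵐ u ∂(volume.restrict (refCube n)), P (Q.center + Q.side • u) := by
  refine ae_of_ae_map (f := fun u : En n => Q.center + Q.side • u)
    (measurableEmbedding_aff Q.center Q.side_pos).measurable.aemeasurable ?_
  rw [map_aff_restrict]
  exact (Measure.smul_absolutelyContinuous.trans
    Measure.restrict_le_self.absolutelyContinuous).ae_le hP

lemma aff_mem {n : ℕ} (Q : Cube n) {u : En n} (hu : u ∈ refCube n) :
    Q.center + Q.side • u ∈ Q.toSet := by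
  rw [← aff_preimage Q] at hu; exact hu

/-! ### Comparison of means -/

/-- The comparison of the two cubes for a smooth function. With `T₁`, `T₂` the affine
parametrizations of the cubes by `refCube n`, the segment from `T₂ u` to `T₁ u` is traced by
`t ↦ (1 - t) T₂ u + t T₁ u`, which for fixed `t` is again a parametrization of a cube, of side at
least `L` and contained in the ball. -/
lemma lintegral_sub_le_of_contDiff {n : ℕ} {g : En n → ℝ} (hg : ContDiff ℝ 1 g)
    (Q₁ Q₂ : Cube n) {z : En n} {R L : ℝ} (hL : 0 < L) (h₁ : L ≤ Q₁.side) (h₂ : L ≤ Q₂.side)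
    (hB₁ : Q₁.toSet ⊆ ball z R) (hB₂ : Q₂.toSet ⊆ ball z R) :
    ∫⁻ u in refCube n, ‖g (Q₁.center + Q₁.side • u) - g (Q₂.center + Q₂.side • u)‖ₑ ≤
      ENNReal.ofReal (2 * R) * (ENNReal.ofReal ((L ^ n)⁻¹) *
        ∫⁻ x in ball z R, ‖fderiv ℝ g x‖ₑ) := by
  set c : ℝ → En n := fun t => Q₂.center + t • (Q₁.center - Q₂.center) with hc
  set l : ℝ → ℝ := fun t => Q₂.side + t * (Q₁.side - Q₂.side) with hl
  have hcont : Continuous (fderiv ℝ g) := hg.continuous_fderiv one_ne_zero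
  have hpt : ∀ u ∈ refCube n,
      ‖g (Q₁.center + Q₁.side • u) - g (Q₂.center + Q₂.side • u)‖ₑ ≤
        ∫⁻ t in Set.Icc (0 : ℝ) 1, ENNReal.ofReal (2 * R) * ‖fderiv ℝ g (c t + l t • u)‖ₑ := by
    intro u hu
    set a := Q₂.center + Q₂.side • u with ha
    set b := Q₁.center + Q₁.side • u with hb
    have haB : a ∈ ball z R := hB₂ (aff_mem Q₂ hu)
    have hbB : b ∈ ball z R := hB₁ (aff_mem Q₁ hu)
    have hγ : ∀ t : ℝ, c t + l t • u = a + t • (b - a) := by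
      intro t
      simp only [hc, hl, ha, hb]
      module
    have hd : ∀ t : ℝ, HasDerivAt (fun t : ℝ => a + t • (b - a)) (b - a) t := by
      intro t
      simpa using ((hasDerivAt_id t).smul_const (b - a)).const_add a
    have hcd : ContDiff ℝ 1 (fun t : ℝ => g (a + t • (b - a))) :=
      hg.comp (contDiff_const.add (contDiff_id.smul contDiff_const))
    have h := enorm_sub_le_lintegral_deriv_of_contDiffOn_Icc
      (f := fun t : ℝ => g (a + t • (b - a))) hcd.contDiffOn (zero_le_one (α := ℝ))
    simp only [one_smul, zero_smul, add_zero, add_sub_cancel] at h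
    refine h.trans (lintegral_mono fun t => ?_)
    have h3 : HasDerivAt (fun t : ℝ => g (a + t • (b - a))) _ t :=
      ((hg.differentiable (by simp) (a + t • (b - a))).hasFDerivAt).comp_hasDerivAt t (hd t)
    rw [h3.deriv, hγ t]
    refine (ContinuousLinearMap.le_opENorm _ _).trans ?_
    rw [mul_comm]
    gcongr
    rw [← ofReal_norm]
    refine ENNReal.ofReal_le_ofReal ?_
    rw [← dist_eq_norm]
    rw [mem_ball] at haB hbB
    linarith [dist_triangle_right b a z]
  calc _ ≤ ∫⁻ u in refCube n, ∫⁻ t in Set.Icc (0 : ℝ) 1,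
        ENNReal.ofReal (2 * R) * ‖fderiv ℝ g (c t + l t • u)‖ₑ :=
        setLIntegral_mono' (measurableSet_refCube n) hpt
    _ = ∫⁻ t in Set.Icc (0 : ℝ) 1, ∫⁻ u in refCube n,
        ENNReal.ofReal (2 * R) * ‖fderiv ℝ g (c t + l t • u)‖ₑ := by
        refine lintegral_lintegral_swap (Measurable.aemeasurable ?_)
        have : Continuous fun q : En n × ℝ => fderiv ℝ g (c q.2 + l q.2 • q.1) :=
          hcont.comp (by simp only [hc, hl]; fun_prop)
        exact this.enorm.measurable.const_mul _
    _ ≤ ∫⁻ t in Set.Icc (0 : ℝ) 1, ENNReal.ofReal (2 * R) * (ENNReal.ofReal ((L ^ n)⁻¹) *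
        ∫⁻ x in ball z R, ‖fderiv ℝ g x‖ₑ) := by
        refine setLIntegral_mono' measurableSet_Icc fun t ht => ?_
        have hlt : L ≤ l t := by
          simp only [hl]
          nlinarith [ht.1, ht.2, mul_nonneg ht.1 (sub_nonneg.mpr h₁),
            mul_nonneg (sub_nonneg.mpr ht.2) (sub_nonneg.mpr h₂)]
        rw [lintegral_const_mul' _ _ ENNReal.ofReal_ne_top]
        gcongr
        refine (lintegral_aff_le (c t) (hL.trans_le hlt) (measurableSet_ball (x := z) (ε := R))
          ?_ (fun y => ‖fderiv ℝ g y‖ₑ)).trans ?_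
        · intro u hu
          have := (convex_ball z R) (hB₂ (aff_mem Q₂ hu)) (hB₁ (aff_mem Q₁ hu))
            (sub_nonneg.mpr ht.2) ht.1 (by ring)
          convert this using 1
          simp only [hc, hl]
          module
        · gcongr
    _ = _ := by simp

/-- A Poincaré inequality comparing the means of `f` over two cubes in the same ball. It passes
from the mollified functions to `f` by almost everywhere convergence and Fatou's lemma; doubling
the ball absorbs the radius of the mollifier. -/
lemma enorm_average_sub_le {n : ℕ} {f : En n → ℝ} {G : En n → En n}
    (hf : LocallyIntegrable f volume) (hG : HasWeakGradient f G) (hGm : Measurable G)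
    (Q₁ Q₂ : Cube n) {z : En n} {R L : ℝ} (hR : 0 < R) (hL : 0 < L)
    (h₁ : L ≤ Q₁.side) (h₂ : L ≤ Q₂.side)
    (hB₁ : Q₁.toSet ⊆ ball z R) (hB₂ : Q₂.toSet ⊆ ball z R) :
    ‖(⨍ y in Q₁.toSet, f y) - ⨍ y in Q₂.toSet, f y‖ₑ ≤
      ENNReal.ofReal (2 * R) * (ENNReal.ofReal ((L ^ n)⁻¹) *
        ∫⁻ x in ball z (2 * R), ‖G x‖ₑ) := by
  -- bump functions with radii tending to `0` at a fixed ratio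
  let φ : ℕ → ContDiffBump (0 : En n) := fun k =>
    { rIn := R / (k + 2) / 2
      rOut := R / (k + 2)
      rIn_pos := by positivity
      rIn_lt_rOut := half_lt_self (by positivity) }
  have hφ0 : Tendsto (fun k => (φ k).rOut) atTop (𝓝 0) := by
    have h := (tendsto_const_div_atTop_nhds_zero_nat R).comp (tendsto_add_atTop_nat 2)
    refine h.congr fun k => ?_
    simp [φ]
  have hφR : ∀ k, (φ k).rOut ≤ R := fun k => div_le_self hR.le (by
    have : (0 : ℝ) ≤ k := Nat.cast_nonneg k
    linarith)
  have hae := ContDiffBump.ae_convolution_tendsto_right_of_locallyIntegrable (K := 2) hφ0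
    (Eventually.of_forall fun k => by simp only [φ]; linarith) hf
  set g : ℕ → En n → ℝ := fun k =>
    convolution ((φ k).normed volume) f (ContinuousLinearMap.lsmul ℝ ℝ) volume with hg
  have hgd : ∀ k, ContDiff ℝ 1 (g k) := fun k =>
    (φ k).hasCompactSupport_normed.contDiff_convolution_left (n := 1) _
      (φ k).contDiff_normed hf
  rw [average_eq, average_eq, ← integral_sub (integrableOn_aff Q₁ hf) (integrableOn_aff Q₂ hf)]
  refine (enorm_integral_le_lintegral_enorm _).trans ?_
  calc ∫⁻ u in refCube n, ‖f (Q₁.center + Q₁.side • u) - f (Q₂.center + Q₂.side • u)‖ₑ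
      = ∫⁻ u in refCube n, liminf (fun k =>
          ‖g k (Q₁.center + Q₁.side • u) - g k (Q₂.center + Q₂.side • u)‖ₑ) atTop := by
        refine lintegral_congr_ae ?_
        filter_upwards [ae_aff Q₁ hae, ae_aff Q₂ hae] with u hu₁ hu₂
        exact ((hu₁.sub hu₂).enorm.liminf_eq).symm
    _ ≤ liminf (fun k => ∫⁻ u in refCube n,
          ‖g k (Q₁.center + Q₁.side • u) - g k (Q₂.center + Q₂.side • u)‖ₑ) atTop := by
        refine lintegral_liminf_le fun k => ?_
        have := (hgd k).continuous
        exact (Continuous.enorm (by fun_prop)).measurable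
    _ ≤ liminf (fun _ : ℕ => ENNReal.ofReal (2 * R) * (ENNReal.ofReal ((L ^ n)⁻¹) *
        ∫⁻ x in ball z (2 * R), ‖G x‖ₑ)) atTop := by
        refine liminf_le_liminf (Eventually.of_forall fun k => ?_)
        refine (lintegral_sub_le_of_contDiff (hgd k) Q₁ Q₂ hL h₁ h₂ hB₁ hB₂).trans ?_
        gcongr ENNReal.ofReal (2 * R) * (ENNReal.ofReal _ * ?_)
        refine (lintegral_fderiv_mollify_le hf hG hGm (φ k) z R).trans ?_
        exact lintegral_mono_set (ball_subset_ball (by linarith [hφR k]))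
    _ = _ := liminf_const _

/-- Jensen's inequality on a ball centred at a point where `M(|G|ᵖ) ≤ αᵖ`. -/
lemma lintegral_le_of_maximalFn_le {n : ℕ} {G : En n → En n} (hGm : Measurable G)
    {p : ℝ} (hp : 1 ≤ p) {α : ℝ} {z : En n}
    (hz : maximalFn (fun y => (‖G y‖₊ : ℝ≥0∞) ^ p) z ≤ ENNReal.ofReal α ^ p)
    {r : ℝ} (hr : 0 < r) :
    ∫⁻ y in ball z r, ‖G y‖ₑ ≤ ENNReal.ofReal α * volume (ball z r) := by
  have hp0 : 0 < p := one_pos.trans_le hp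
  have hB0 : volume (ball z r) ≠ 0 := (measure_ball_pos volume z hr).ne'
  have hBt : volume (ball z r) ≠ ∞ := measure_ball_lt_top.ne
  have h1 : (volume (ball z r))⁻¹ * ∫⁻ y in ball z r, ‖G y‖ₑ ^ p ≤ ENNReal.ofReal α ^ p := by
    refine le_trans ?_ hz
    exact le_iSup₂_of_le z r (le_iSup₂_of_le hr (mem_ball_self hr) le_rfl)
  set μ : Measure (En n) := (volume (ball z r))⁻¹ • volume.restrict (ball z r) with hμ
  have : IsProbabilityMeasure μ := ⟨by
    rw [hμ, Measure.smul_apply, Measure.restrict_apply_univ, smul_eq_mul,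
      ENNReal.inv_mul_cancel hB0 hBt]⟩
  have h2 := eLpNorm'_le_eLpNorm'_of_exponent_le one_pos hp μ hGm.aestronglyMeasurable
  simp only [eLpNorm'_eq_lintegral_enorm, ENNReal.rpow_one, hμ, lintegral_smul_measure,
    smul_eq_mul, div_one] at h2
  have h3 : (volume (ball z r))⁻¹ * ∫⁻ y in ball z r, ‖G y‖ₑ ≤ ENNReal.ofReal α := by
    refine h2.trans ?_
    rw [one_div, ENNReal.rpow_inv_le_iff hp0]
    exact h1
  rwa [ENNReal.inv_mul_le_iff hB0 hBt, mul_comm] at h3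

/-! ### Geometry of Whitney cubes -/

lemma dist_le_of_forall_abs_le {n : ℕ} {x y : En n} {d : ℝ} (hd : 0 ≤ d)
    (h : ∀ j, |x j - y j| ≤ d) : dist x y ≤ √n * d := by
  rw [EuclideanSpace.dist_eq]
  calc √(∑ j, dist (x j) (y j) ^ 2) ≤ √(∑ _j : Fin n, d ^ 2) := by
        refine Real.sqrt_le_sqrt (Finset.sum_le_sum fun j _ => ?_)
        rw [Real.dist_eq]
        exact pow_le_pow_left₀ (abs_nonneg _) (h j) 2
    _ = √n * d := by
        simp [Real.sqrt_sq hd]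

lemma dist_le_of_mem_toSet {n : ℕ} (Q : Cube n) {x y : En n} (hx : x ∈ Q.toSet)
    (hy : y ∈ Q.toSet) : dist x y ≤ √n * Q.side := by
  refine dist_le_of_forall_abs_le Q.side_pos.le fun j => ?_
  have h1 := abs_le.mp (hx j)
  have h2 := abs_le.mp (hy j)
  rw [abs_le]
  constructor <;> linarith

lemma diam_toSet {n : ℕ} (Q : Cube n) : Metric.diam Q.toSet = √n * Q.side := by
  have hs := Q.side_pos
  refine le_antisymm (Metric.diam_le_of_forall_dist_le (by positivity) fun x hx y hy =>
    dist_le_of_mem_toSet Q hx hy) ?_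
  -- the two opposite corners of the cube
  let v : En n := WithLp.toLp 2 fun _ => Q.side / 2
  have h1 : Q.center + v ∈ Q.toSet := fun j => by
    simp [v, abs_of_pos (half_pos hs)]
  have h2 : Q.center - v ∈ Q.toSet := fun j => by
    simp [v, abs_of_pos (half_pos hs)]
  have h := Metric.dist_le_diam_of_mem (isCompact_toSet Q).isBounded h1 h2
  refine le_trans (le_of_eq ?_) h
  rw [EuclideanSpace.dist_eq]
  have : ∀ j, dist ((Q.center + v) j) ((Q.center - v) j) ^ 2 = Q.side ^ 2 := fun j => by
    rw [Real.dist_eq, sq_abs]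
    simp only [v, PiLp.add_apply, PiLp.sub_apply]
    ring
  simp only [this]
  simp [Real.sqrt_sq hs.le]

lemma exists_mem_toSet_near {n : ℕ} (Q : Cube n) {x : En n} (hx : x ∈ Q.dilate (9 / 8)) :
    ∃ q ∈ Q.toSet, dist x q ≤ √n * Q.side / 16 := by
  have hs := Q.side_pos
  -- shrink `x` towards the centre by the factor `8 / 9`
  have hq : ∀ j, (Q.center + (8 / 9 : ℝ) • (x - Q.center)) j =
      Q.center j + 8 / 9 * (x j - Q.center j) := fun j => by simp
  refine ⟨Q.center + (8 / 9 : ℝ) • (x - Q.center), fun j => ?_, ?_⟩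
  · rw [hq]
    have := abs_le.mp (hx j)
    rw [abs_le]
    constructor <;> linarith
  · rw [mul_div_assoc]
    refine dist_le_of_forall_abs_le (by positivity) fun j => ?_
    rw [hq]
    have := abs_le.mp (hx j)
    rw [abs_le]
    constructor <;> linarith

lemma bddBelow_image2_dist {n : ℕ} (s t : Set (En n)) : BddBelow (Set.image2 dist s t) :=
  ⟨0, by rintro _ ⟨a, _, b, _, rfl⟩; exact dist_nonneg⟩

lemma IsWhitneyDecomposition.side_le_dist {n : ℕ} {ι : Type*} {Ω : Set (En n)} {Q : ι → Cube n}
    (hW : IsWhitneyDecomposition Ω Q) (i : ι) {q z : En n} (hq : q ∈ (Q i).toSet)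
    (hz : z ∈ Ωᶜ) : √n * (Q i).side ≤ dist q z := by
  rw [← diam_toSet]
  exact (hW.2.2 i).1.trans (csInf_le (bddBelow_image2_dist _ _) ⟨q, hq, z, hz, rfl⟩)

lemma IsWhitneyDecomposition.exists_near {n : ℕ} (hn : 1 ≤ n) {ι : Type*} {Ω : Set (En n)}
    {Q : ι → Cube n} (hW : IsWhitneyDecomposition Ω Q) (i : ι) :
    ∃ q ∈ (Q i).toSet, ∃ z ∈ Ωᶜ, dist q z ≤ 5 * (√n * (Q i).side) := by
  have hs := (Q i).side_pos
  have hpos : 0 < √n * (Q i).side := by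
    have : (0 : ℝ) < n := by exact_mod_cast hn
    positivity
  obtain ⟨h1, h2⟩ := hW.2.2 i
  rw [diam_toSet] at h1 h2
  -- for `Ω = univ` the distance to the complement would be the infimum of `∅`, which is `0`
  have hne : (Set.image2 dist (Q i).toSet Ωᶜ).Nonempty := by
    by_contra h
    rw [setDist, Set.not_nonempty_iff_eq_empty.mp h, Real.sInf_empty] at h1
    linarith
  have h3 : sInf (Set.image2 dist (Q i).toSet Ωᶜ) < 5 * (√n * (Q i).side) := by
    refine lt_of_le_of_lt h2 ?_
    linarith
  obtain ⟨_, ⟨q, hq, z, hz, rfl⟩, hlt⟩ := exists_lt_of_csInf_lt hne h3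
  exact ⟨q, hq, z, hz, hlt.le⟩

/-- Whitney cubes whose `9/8`-dilates meet have comparable sides. A point `x` of the dilate of `Q i`
is at distance at least `(15/16) √n ℓ_i` from `Ωᶜ`, and as a point of the dilate of `Q m` at most
`(1/16 + 1 + 5) √n ℓ_m`. -/
lemma IsWhitneyDecomposition.side_le {n : ℕ} (hn : 1 ≤ n) {ι : Type*} {Ω : Set (En n)}
    {Q : ι → Cube n} (hW : IsWhitneyDecomposition Ω Q) {i m : ι} {x : En n}
    (hi : x ∈ (Q i).dilate (9 / 8)) (hm : x ∈ (Q m).dilate (9 / 8)) :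
    (Q i).side ≤ 7 * (Q m).side := by
  have hsi := (Q i).side_pos
  have hsm := (Q m).side_pos
  have hn' : (0 : ℝ) < √n := by
    have : (0 : ℝ) < n := by exact_mod_cast hn
    positivity
  obtain ⟨qi, hqi, hdi⟩ := exists_mem_toSet_near _ hi
  obtain ⟨qm, hqm, hdm⟩ := exists_mem_toSet_near _ hm
  obtain ⟨y, hy, z, hz, hyz⟩ := hW.exists_near hn m
  have h1 := hW.side_le_dist i hqi hz
  have h2 := dist_le_of_mem_toSet _ hqm hy
  have h3 : dist qi z ≤ dist x qi + dist x qm + dist qm y + dist y z := by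
    linarith [dist_triangle qi x z, dist_triangle x qm z, dist_triangle qm y z, dist_comm qi x]
  refine le_of_mul_le_mul_left ?_ hn'
  nlinarith [mul_pos hn' hsm]

/-- Two Whitney cubes whose `9/8`-dilates meet lie in one ball of comparable radius
centred outside `Ω`. -/
lemma IsWhitneyDecomposition.exists_ball {n : ℕ} (hn : 1 ≤ n) {ι : Type*} {Ω : Set (En n)}
    {Q : ι → Cube n} (hW : IsWhitneyDecomposition Ω Q) {i m : ι} {x : En n}
    (hi : x ∈ (Q i).dilate (9 / 8)) (hm : x ∈ (Q m).dilate (9 / 8)) :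
    ∃ z ∈ Ωᶜ, (Q i).toSet ⊆ ball z (14 * (√n * (Q m).side)) ∧
      (Q m).toSet ⊆ ball z (14 * (√n * (Q m).side)) := by
  have hsm := (Q m).side_pos
  have hn' : (0 : ℝ) < √n := by
    have : (0 : ℝ) < n := by exact_mod_cast hn
    positivity
  obtain ⟨qi, hqi, hdi⟩ := exists_mem_toSet_near _ hi
  obtain ⟨qm, hqm, hdm⟩ := exists_mem_toSet_near _ hm
  obtain ⟨y, hy, z, hz, hyz⟩ := hW.exists_near hn m
  have h7 : √n * (Q i).side ≤ 7 * (√n * (Q m).side) := by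
    nlinarith [hW.side_le hn hi hm]
  have hpos := mul_pos hn' hsm
  refine ⟨z, hz, fun w hw => ?_, fun w hw => ?_⟩
  · have h1 := dist_le_of_mem_toSet _ hw hqi
    have h2 := dist_le_of_mem_toSet _ hqm hy
    rw [mem_ball]
    linarith [dist_triangle w qi z, dist_triangle qi x z, dist_triangle x qm z,
      dist_triangle qm y z, dist_comm qi x]
  · have h1 := dist_le_of_mem_toSet _ hw hy
    rw [mem_ball]
    linarith [dist_triangle w y z]

/-! ### Means over neighbouring Whitney cubes -/

/-- The constant in the comparison of the means over neighbouring Whitney cubes. -/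
def meanConst (n : ℕ) : ℝ :=
  28 * √n * 7 ^ n * (28 * √n) ^ n * (volume (ball (0 : En n) 1)).toReal

lemma meanConst_pos {n : ℕ} (hn : 1 ≤ n) : 0 < meanConst n := by
  have : (0 : ℝ) < n := by exact_mod_cast hn
  have := ENNReal.toReal_pos (measure_ball_pos volume (0 : En n) one_pos).ne'
    measure_ball_lt_top.ne
  unfold meanConst
  positivity

/-- Neighbouring cubes are treated through a common point `x` of their `9/8`-dilates. -/
lemma abs_average_sub_le {n : ℕ} (hn : 1 ≤ n) {p : ℝ} (hp : 1 ≤ p)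
    {f : En n → ℝ} {G : En n → En n} (hf : LocallyIntegrable f volume)
    (hG : HasWeakGradient f G) (hGm : Measurable G) {α : ℝ} (hα : 0 < α) {Ω : Set (En n)}
    (hΩ : Ω = {x | ENNReal.ofReal α ^ p < maximalFn (fun y => (‖G y‖₊ : ℝ≥0∞) ^ p) x})
    {ι : Type*} {Q : ι → Cube n} (hW : IsWhitneyDecomposition Ω Q) {i m : ι} {x : En n}
    (hi : x ∈ (Q i).dilate (9 / 8)) (hm : x ∈ (Q m).dilate (9 / 8)) :
    |(⨍ y in (Q m).toSet, f y) - ⨍ y in (Q i).toSet, f y| ≤ meanConst n * α * (Q m).side := by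
  have hs := (Q m).side_pos
  have hn' : (0 : ℝ) < √n := by
    have : (0 : ℝ) < n := by exact_mod_cast hn
    positivity
  obtain ⟨z, hz, hBi, hBm⟩ := hW.exists_ball hn hi hm
  have hz' : maximalFn (fun y => (‖G y‖₊ : ℝ≥0∞) ^ p) z ≤ ENNReal.ofReal α ^ p := by
    rw [hΩ] at hz
    exact not_lt.mp hz
  set R := 14 * (√n * (Q m).side) with hR
  have hRpos : 0 < R := by positivity
  have hL : (Q m).side / 7 ≤ (Q i).side := by linarith [hW.side_le hn hm hi]
  have h1 := enorm_average_sub_le hf hG hGm (Q m) (Q i) hRpos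
    (L := (Q m).side / 7) (by positivity) (by linarith) hL hBm hBi
  have h2 := lintegral_le_of_maximalFn_le hGm hp hz' (r := 2 * R) (by positivity)
  rw [Measure.addHaar_ball_of_pos _ _ (by positivity), finrank_euclideanSpace_fin,
    ← ENNReal.ofReal_toReal (measure_ball_lt_top (μ := volume) (x := (0 : En n)) (r := 1)).ne] at h2
  have h3 := h1.trans (mul_le_mul_right (mul_le_mul_right h2 _) _)
  rw [← ENNReal.ofReal_mul (by positivity), ← ENNReal.ofReal_mul (by positivity),
    ← ENNReal.ofReal_mul (by positivity), ← ENNReal.ofReal_mul (by positivity),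
    Real.enorm_eq_ofReal_abs, ENNReal.ofReal_le_ofReal_iff (by positivity)] at h3
  refine h3.trans (le_of_eq ?_)
  rw [meanConst, hR, div_pow]
  field_simp
  ring

lemma gradient_eq_zero_of_notMem_tsupport {n : ℕ} {g : En n → ℝ} {x : En n}
    (hx : x ∉ tsupport g) : gradient g x = 0 := by
  have : fderiv ℝ g x = 0 := by
    by_contra h
    exact hx (support_fderiv_subset ℝ h)
  simp [gradient, this]

/-- A finitely supported sum with at most `N` nonzero terms, each at most `B`. -/
lemma finsum_le_card_mul {ι : Type*} {g : ι → ℝ} {s : Set ι} {N : ℕ} {B : ℝ} (hB : 0 ≤ B)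
    (hs : s.Finite) (hN : s.ncard ≤ N) (hsupp : Function.support g ⊆ s)
    (hle : ∀ i ∈ s, g i ≤ B) : ∑ᶠ i, g i ≤ N * B := by
  rw [finsum_eq_sum_of_support_subset (s := hs.toFinset) g (by simpa using hsupp)]
  calc ∑ i ∈ hs.toFinset, g i ≤ hs.toFinset.card • B :=
        Finset.sum_le_card_nsmul _ _ _ fun i hi => hle i (hs.mem_toFinset.mp hi)
    _ ≤ N * B := by
        rw [nsmul_eq_mul, ← Set.ncard_eq_toFinset_card s hs]
        gcongr

/-- For the Calderón–Zygmund decomposition with `cᵢ = m_{Qᵢ} f`: neighboring cubes satisfy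
`|c_m − cᵢ| ≤ Cαℓ_m`, and consequently
`Σ_m Σ_{i∈I_m} |c_m − cᵢ||∇𝒳ᵢ|𝒳_m ≤ C'α` pointwise. -/
theorem whitney_mean_comparison (n : ℕ) (hn : 1 ≤ n) (p : ℝ) (hp : 1 ≤ p)
    (C𝒳 : ℝ) (hC𝒳 : 0 < C𝒳) (N : ℕ) :
    ∃ C C' : ℝ, 0 < C ∧ 0 < C' ∧
      ∀ (f : En n → ℝ) (G : En n → En n), LocallyIntegrable f volume →
        HasWeakGradient f G → Measurable G →
        eLpNorm (fun x => ‖G x‖) (ENNReal.ofReal p) volume < ⊤ →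
      ∀ α : ℝ, 0 < α →
      ∀ (Ω : Set (En n)),
        Ω = {x | (ENNReal.ofReal α) ^ p <
              maximalFn (fun y => (‖G y‖₊ : ℝ≥0∞) ^ p) x} →
      ∀ (ι : Type) (Q : ι → Cube n), IsWhitneyDecomposition Ω Q →
      ∀ (𝒳 : ι → En n → ℝ),
        (∀ i, ContDiff ℝ (⊤ : ℕ∞) (𝒳 i)) →
        (∀ i, tsupport (𝒳 i) ⊆ (Q i).dilate (9/8)) →
        (∀ i x, 0 ≤ 𝒳 i x) → (∀ i x, 𝒳 i x ≤ 1) →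
        (∀ x ∈ Ω, ∑ᶠ i, 𝒳 i x = 1) →
        (∀ i x, ‖gradient (𝒳 i) x‖ ≤ C𝒳 / (Q i).side) →
        (∀ x : En n, {i | x ∈ tsupport (𝒳 i)}.Finite ∧
          {i | x ∈ tsupport (𝒳 i)}.ncard ≤ N) →
      ∀ c : ι → ℝ, (∀ i, c i = ⨍ y in (Q i).toSet, f y) →
        -- |c_m − cᵢ| ≤ C α ℓ_m for neighboring cubes
        (∀ m i : ι, (tsupport (𝒳 i) ∩ tsupport (𝒳 m)).Nonempty →
          |c m - c i| ≤ C * α * (Q m).side) ∧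
        -- Σ_m Σ_{i∈I_m} |c_m − cᵢ||∇𝒳ᵢ|𝒳_m ≤ C'α pointwise
        (∀ x : En n,
          ∑ᶠ m, (∑ᶠ i ∈ {i : ι | (tsupport (𝒳 i) ∩ tsupport (𝒳 m)).Nonempty},
            |c m - c i| * ‖gradient (𝒳 i) x‖) * 𝒳 m x ≤ C' * α) := by
  have hC := meanConst_pos hn
  refine ⟨meanConst n, N * (N * (meanConst n * C𝒳)) + 1, hC, by positivity, ?_⟩
  intro f G hf hG hGm _ α hα Ω hΩ ι Q hW 𝒳 _ hsupp h0 h1 _ hgrad hfin c hc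
  have main : ∀ m i : ι, (tsupport (𝒳 i) ∩ tsupport (𝒳 m)).Nonempty →
      |c m - c i| ≤ meanConst n * α * (Q m).side := by
    rintro m i ⟨x, hxi, hxm⟩
    rw [hc, hc]
    exact abs_average_sub_le hn hp hf hG hGm hα hΩ hW (hsupp i hxi) (hsupp m hxm)
  refine ⟨main, fun x => ?_⟩
  obtain ⟨hxf, hxN⟩ := hfin x
  have hterm : ∀ m i : ι, (tsupport (𝒳 i) ∩ tsupport (𝒳 m)).Nonempty →
      |c m - c i| * ‖gradient (𝒳 i) x‖ ≤ meanConst n * C𝒳 * α := by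
    intro m i h
    -- the roles of `m` and `i` are exchanged, so that the side length of `Q i` cancels
    have h2 := main i m (by rwa [Set.inter_comm])
    have hs := (Q i).side_pos
    rw [abs_sub_comm] at h2
    calc _ ≤ (meanConst n * α * (Q i).side) * (C𝒳 / (Q i).side) :=
          mul_le_mul h2 (hgrad i x) (norm_nonneg _) (by positivity)
      _ = _ := by field_simp
  have hB : 0 ≤ meanConst n * C𝒳 * α := by positivity
  have hinner : ∀ m : ι, ∑ᶠ i ∈ {i : ι | (tsupport (𝒳 i) ∩ tsupport (𝒳 m)).Nonempty},
      |c m - c i| * ‖gradient (𝒳 i) x‖ ≤ N * (meanConst n * C𝒳 * α) := by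
    intro m
    refine finsum_le_card_mul hB hxf hxN ?_ fun i _ => ?_
    · intro i hi
      by_contra hx
      apply hi
      simp [gradient_eq_zero_of_notMem_tsupport hx]
    · classical
      by_cases h : (tsupport (𝒳 i) ∩ tsupport (𝒳 m)).Nonempty
      · have h' : i ∈ {i : ι | (tsupport (𝒳 i) ∩ tsupport (𝒳 m)).Nonempty} := h
        rw [finsum_eq_if, if_pos h']
        exact hterm m i h
      · have h' : i ∉ {i : ι | (tsupport (𝒳 i) ∩ tsupport (𝒳 m)).Nonempty} := h
        rw [finsum_eq_if, if_neg h']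
        exact hB
  have houter := finsum_le_card_mul (B := N * (meanConst n * C𝒳 * α)) (by positivity) hxf hxN
    (g := fun m => (∑ᶠ i ∈ {i : ι | (tsupport (𝒳 i) ∩ tsupport (𝒳 m)).Nonempty},
      |c m - c i| * ‖gradient (𝒳 i) x‖) * 𝒳 m x) ?_ ?_
  · refine houter.trans ?_
    nlinarith
  · intro m hm
    by_contra hx
    apply hm
    simp [image_eq_zero_of_notMem_tsupport hx]
  · intro m _
    calc _ ≤ (N * (meanConst n * C𝒳 * α)) * 𝒳 m x :=
          mul_le_mul_of_nonneg_right (hinner m) (h0 m x)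
      _ ≤ _ := mul_le_of_le_one_right (by positivity) (h1 m x)
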